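/- The two edge invariant measures give the same value to the Lyapunov functional: ∫_ℝ log(1 + e^{−y}) ν_▷(dy) = ∫_ℝ log(1 + e^{−y}) ν_◁(dy); equivalently, ∫_ℝ F_▷(y)/(1 + e^y) dy = ∫_ℝ F_◁(y)/(1 + e^y) dy. -/

import Mathlib

open MeasureTheory ProbabilityTheory Real Filter Set
open scoped ENNReal

noncomputable def hkfun (k x : ℝ) : ℝ :=
  Real.log ((Real.exp (-k) + Real.exp x) / (1 + Real.exp (x - k)))

noncomputable def hY (y : ℝ) : ℝ := y + Real.log (1 + Real.exp (-y))

/-- A σ-finite measure ν is invariant for the chain Y_{n+1} = z_{n+1} + hY (Y_n),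
where the increments have density ζ. -/
def IsInvariantY (ζ : ℝ → ℝ) (ν : Measure ℝ) : Prop :=
  ∀ g : ℝ → ℝ≥0∞, Measurable g →
    ∫⁻ z, g z ∂ν = ∫⁻ y, ∫⁻ z, g (z + hY y) * ENNReal.ofReal (ζ z) ∂volume ∂ν

noncomputable def Fs (ν : Measure ℝ) (x : ℝ) : ℝ := (ν (Set.Iic x)).toReal

lemma hY_eq (y : ℝ) : hY y = Real.log (1 + Real.exp y) := by
  unfold hY
  have h1 : (0:ℝ) < 1 + Real.exp (-y) := by positivity
  have : 1 + Real.exp y = Real.exp y * (1 + Real.exp (-y)) := by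
    rw [mul_add, ← Real.exp_add]; simp [add_comm]
  rw [this, Real.log_mul (Real.exp_pos y).ne' h1.ne', Real.log_exp]

lemma hY_pos (y : ℝ) : 0 < hY y := by
  rw [hY_eq]; exact Real.log_pos (by linarith [Real.exp_pos y])

lemma Dl_pos (y : ℝ) : 0 < Real.log (1 + Real.exp (-y)) :=
  Real.log_pos (by linarith [Real.exp_pos (-y)])

lemma hY_lt (y : ℝ) : y < hY y := by
  unfold hY; linarith [Dl_pos y]

lemma hY_le_one {y : ℝ} (hy : y ≤ 0) : hY y ≤ 1 := by
  rw [hY_eq]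
  have : Real.log (1 + Real.exp y) ≤ (1 + Real.exp y) - 1 :=
    Real.log_le_sub_one_of_pos (by positivity)
  have := Real.exp_le_one_iff.2 hy
  linarith

lemma hY_le_add {y : ℝ} (hy : 0 ≤ y) : hY y ≤ y + 1 := by
  unfold hY
  have : Real.log (1 + Real.exp (-y)) ≤ (1 + Real.exp (-y)) - 1 :=
    Real.log_le_sub_one_of_pos (by positivity)
  have : Real.exp (-y) ≤ 1 := Real.exp_le_one_iff.2 (by linarith)
  linarith

lemma hY_meas : Measurable hY := by
  unfold hY; fun_prop

noncomputable def Rf (a z : ℝ) : ℝ := (max (a - z) 0)^2 - (max a 0)^2 + 2 * z * max a 0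

lemma Rf_nonneg (a z : ℝ) : 0 ≤ Rf a z := by
  unfold Rf
  rcases max_cases (a - z) 0 with ⟨h1, h2⟩ | ⟨h1, h2⟩ <;>
  rcases max_cases a 0 with ⟨h3, h4⟩ | ⟨h3, h4⟩ <;> rw [h1, h3] <;> nlinarith [sq_nonneg z]

lemma Rf_le (a z : ℝ) : Rf a z ≤ z^2 := by
  unfold Rf
  rcases max_cases (a - z) 0 with ⟨h1, h2⟩ | ⟨h1, h2⟩ <;>
  rcases max_cases a 0 with ⟨h3, h4⟩ | ⟨h3, h4⟩ <;> rw [h1, h3] <;> nlinarith [sq_nonneg z, sq_nonneg (a - z)]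

lemma Rf_eq {a z : ℝ} (h : |z| ≤ a) : Rf a z = z^2 := by
  unfold Rf
  have := le_abs_self z
  have := abs_nonneg z
  rw [max_eq_left (by linarith), max_eq_left (by linarith)]; ring

lemma Rf_zero {a z : ℝ} (h : a < -|z|) : Rf a z = 0 := by
  unfold Rf
  have := neg_abs_le z
  have := abs_nonneg z
  rw [max_eq_right (by linarith), max_eq_right (by linarith)]; ring

lemma Rf_meas : Measurable (fun p : ℝ × ℝ => Rf p.1 p.2) := by
  unfold Rf; fun_prop

lemma step_taylor (μ : Measure ℝ) [IsProbabilityMeasure μ]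
    (h1 : Integrable (fun z : ℝ => z) μ) (h2 : Integrable (fun z : ℝ => z^2) μ)
    (hm : ∫ z, z ∂μ = 0) (a : ℝ) :
    ∫⁻ z, ENNReal.ofReal ((max (a - z) 0)^2) ∂μ
      = ENNReal.ofReal ((max a 0)^2) + ∫⁻ z, ENNReal.ofReal (Rf a z) ∂μ := by
  have hR : Integrable (fun z => Rf a z) μ := by
    refine h2.mono' ?_ ?_
    · exact (Rf_meas.comp (measurable_const.prodMk measurable_id)).aestronglyMeasurable
    · exact Eventually.of_forall fun z => by
        rw [Real.norm_eq_abs, abs_of_nonneg (Rf_nonneg a z)]; exact Rf_le a z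
  have e : (fun z : ℝ => (max (a - z) 0)^2)
      = fun z => ((max a 0)^2 + Rf a z) - (2 * max a 0) * z := by
    funext z; unfold Rf; ring
  have hi : Integrable (fun z : ℝ => (max (a - z) 0)^2) μ := by
    rw [e]; exact ((integrable_const _).add hR).sub (h1.const_mul _)
  rw [← ofReal_integral_eq_lintegral_ofReal hi (Eventually.of_forall fun z => by positivity),
    ← ofReal_integral_eq_lintegral_ofReal hR (Eventually.of_forall fun z => Rf_nonneg a z),
    ← ENNReal.ofReal_add (by positivity) (integral_nonneg fun z => Rf_nonneg a z)]
  congr 1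
  have hc : Integrable (fun z => (max a 0)^2 + Rf a z) μ := (integrable_const _).add hR
  rw [e, integral_sub hc (h1.const_mul _),
    integral_add (integrable_const _) hR, integral_const_mul, hm]
  simp

noncomputable def Df (T y : ℝ) : ℝ := (max (T - y) 0)^2 - (max (T - hY y) 0)^2

lemma Df_nonneg (T y : ℝ) : 0 ≤ Df T y := by
  unfold Df
  have : max (T - hY y) 0 ≤ max (T - y) 0 := max_le_max (by linarith [hY_lt y]) le_rfl
  have : 0 ≤ max (T - hY y) 0 := le_max_right _ _
  nlinarith

lemma Df_meas (T : ℝ) : Measurable (Df T) := by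
  unfold Df
  have := hY_meas
  fun_prop

lemma Df_le {T : ℝ} (hT : 1 ≤ T) (y : ℝ) :
    Df T y / T ≤ Df 1 y + 2 * Real.log (1 + Real.exp (-y)) := by
  have hh : hY y = y + Real.log (1 + Real.exp (-y)) := rfl
  have hD := Dl_pos y
  have hD1 := Df_nonneg 1 y
  have hp := hY_pos y
  set D := Real.log (1 + Real.exp (-y)) with hDd
  rw [div_le_iff₀ (by linarith)]
  rcases le_or_gt y 0 with hy | hy
  · have h1 := hY_le_one hy
    have eT : Df T y = D * (2 * T - (2 * y + D)) := by
      unfold Df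
      rw [max_eq_left (by linarith), max_eq_left (by linarith), hh]; ring
    have e1 : Df 1 y = D * (2 * 1 - (2 * y + D)) := by
      unfold Df
      rw [max_eq_left (by linarith), max_eq_left (by linarith), hh]; ring
    rcases le_or_gt (2 * y + D) 0 with h | h
    · have : 0 ≤ D * (-(2 * y + D)) * (T - 1) := by
        apply mul_nonneg (mul_nonneg hD.le (by linarith)) (by linarith)
      rw [eT, e1]; nlinarith
    · have : 0 ≤ D * (2 * y + D) := by positivity
      rw [eT]; nlinarith
  · have : Df T y ≤ 2 * D * T := by
      unfold Df
      rw [hh]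
      rcases max_cases (T - y) 0 with ⟨h1, h2⟩ | ⟨h1, h2⟩ <;>
      rcases max_cases (T - (y + D)) 0 with ⟨h3, h4⟩ | ⟨h3, h4⟩ <;> rw [h1, h3] <;> nlinarith
    nlinarith

lemma Df_tendsto (y : ℝ) :
    Tendsto (fun n : ℕ => Df (n + 1 : ℝ) y / (n + 1 : ℝ)) atTop
      (nhds (2 * Real.log (1 + Real.exp (-y)))) := by
  have hh : hY y = y + Real.log (1 + Real.exp (-y)) := rfl
  have ht : Tendsto (fun n : ℕ => (n + 1 : ℝ)) atTop atTop :=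
    tendsto_atTop_add_const_right _ _ tendsto_natCast_atTop_atTop
  set D := Real.log (1 + Real.exp (-y)) with hDd
  have h0 : Tendsto (fun n : ℕ => 2 * D - D * (2 * y + D) * (n + 1 : ℝ)⁻¹) atTop
      (nhds (2 * D - D * (2 * y + D) * 0)) :=
    tendsto_const_nhds.sub (tendsto_const_nhds.mul (tendsto_inv_atTop_zero.comp ht))
  rw [mul_zero, sub_zero] at h0
  refine h0.congr' ?_
  filter_upwards [ht.eventually_ge_atTop (hY y)] with n hn
  have := hY_lt y
  have hp : (0:ℝ) < n + 1 := by positivity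
  unfold Df
  rw [max_eq_left (by linarith), max_eq_left (by linarith), hh]
  field_simp
  ring

lemma step_cancel (μ ν : Measure ℝ) [IsProbabilityMeasure μ]
    (h1 : Integrable (fun z : ℝ => z) μ) (h2 : Integrable (fun z : ℝ => z^2) μ)
    (hm : ∫ z, z ∂μ = 0)
    (hinv : ∀ g : ℝ → ℝ≥0∞, Measurable g →
      ∫⁻ z, g z ∂ν = ∫⁻ y, ∫⁻ z, g (z + hY y) ∂μ ∂ν)
    (hfin : ∀ x : ℝ, ν (Set.Iic x) < ⊤) (T : ℝ) (hT : 0 < T) :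
    ∫⁻ y, ENNReal.ofReal (Df T y) ∂ν
      = ∫⁻ y, ∫⁻ z, ENNReal.ofReal (Rf (T - hY y) z) ∂μ ∂ν := by
  have hYm := hY_meas
  have A := hinv (fun y => ENNReal.ofReal ((max (T - y) 0)^2)) (by fun_prop)
  have e1 : ∀ y, ENNReal.ofReal ((max (T - y) 0)^2)
      = ENNReal.ofReal ((max (T - hY y) 0)^2) + ENNReal.ofReal (Df T y) := by
    intro y
    rw [← ENNReal.ofReal_add (by positivity) (Df_nonneg T y)]
    congr 1; unfold Df; ring
  have e2 : ∀ y, ∫⁻ z, ENNReal.ofReal ((max (T - (z + hY y)) 0)^2) ∂μ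
      = ENNReal.ofReal ((max (T - hY y) 0)^2)
        + ∫⁻ z, ENNReal.ofReal (Rf (T - hY y) z) ∂μ := by
    intro y
    rw [← step_taylor μ h1 h2 hm]
    refine lintegral_congr fun z => ?_
    congr 3; ring
  rw [lintegral_congr e1, lintegral_congr e2] at A
  have hmm : Measurable (fun y => ENNReal.ofReal ((max (T - hY y) 0)^2)) := by fun_prop
  rw [lintegral_add_left hmm, lintegral_add_left hmm] at A
  refine (ENNReal.add_right_inj ?_).1 A
  refine ne_of_lt ?_
  calc ∫⁻ y, ENNReal.ofReal ((max (T - hY y) 0)^2) ∂ν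
      ≤ ∫⁻ y, (Set.Iic T).indicator (fun _ => ENNReal.ofReal (T^2)) y ∂ν := by
        refine lintegral_mono fun y => ?_
        by_cases hy : y ≤ T
        · rw [Set.indicator_of_mem (by exact hy)]
          apply ENNReal.ofReal_le_ofReal
          apply pow_le_pow_left₀ (le_max_right _ _)
          exact max_le (by linarith [hY_pos y]) hT.le
        · rw [max_eq_right (by linarith [hY_lt y, not_le.1 hy])]
          simp
    _ = ENNReal.ofReal (T^2) * ν (Set.Iic T) := by
        rw [lintegral_indicator measurableSet_Iic, setLIntegral_const]
    _ < ⊤ := ENNReal.mul_lt_top ENNReal.ofReal_lt_top (hfin T)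

lemma Fs_ofReal (ν : Measure ℝ) (hfin : ∀ x : ℝ, ν (Set.Iic x) < ⊤) (x : ℝ) :
    ν (Set.Iic x) = ENNReal.ofReal (Fs ν x) := by
  unfold Fs; rw [ENNReal.ofReal_toReal (hfin x).ne]

lemma Fs_nonneg (ν : Measure ℝ) (x : ℝ) : 0 ≤ Fs ν x := ENNReal.toReal_nonneg

lemma Fs_mono (ν : Measure ℝ) (hfin : ∀ x : ℝ, ν (Set.Iic x) < ⊤) : Monotone (Fs ν) := by
  intro x y h
  exact ENNReal.toReal_mono (hfin y).ne (measure_mono (Set.Iic_subset_Iic.2 h))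

lemma Fs_bound (ν : Measure ℝ) (hfin : ∀ x : ℝ, ν (Set.Iic x) < ⊤)
    (hnorm : Tendsto (fun x => Fs ν x / x) atTop (nhds 1)) :
    ∃ C : ℝ, 1 ≤ C ∧ ∀ x, Fs ν x ≤ 2 * (C + |x|) := by
  have h := (hnorm.eventually_le_const (show (1:ℝ) < 2 by norm_num)).and (eventually_ge_atTop 1)
  obtain ⟨C, hC⟩ := eventually_atTop.1 h
  refine ⟨max C 1, le_max_right _ _, fun x => ?_⟩
  have h1 := hC (max C 1 + |x|) (by linarith [le_max_left C 1, abs_nonneg x])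
  rw [div_le_iff₀ (by linarith [h1.2])] at h1
  refine le_trans (Fs_mono ν hfin ?_) h1.1
  linarith [le_max_right C 1, le_abs_self x]

lemma Fs_shift (ν : Measure ℝ) (hfin : ∀ x : ℝ, ν (Set.Iic x) < ⊤)
    (hnorm : Tendsto (fun x => Fs ν x / x) atTop (nhds 1)) (c : ℝ) :
    Tendsto (fun n : ℕ => ν (Set.Iic (n + 1 + c)) / ENNReal.ofReal (n + 1)) atTop (nhds 1) := by
  have ht0 : Tendsto (fun n : ℕ => (n + 1 : ℝ)) atTop atTop :=
    tendsto_atTop_add_const_right _ _ tendsto_natCast_atTop_atTop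
  have ht : Tendsto (fun n : ℕ => (n + 1 + c : ℝ)) atTop atTop :=
    tendsto_atTop_add_const_right _ _ ht0
  have h1 := hnorm.comp ht
  have h2 : Tendsto (fun n : ℕ => 1 + c * (n + 1 : ℝ)⁻¹) atTop (nhds (1 + c * 0)) :=
    tendsto_const_nhds.add (tendsto_const_nhds.mul (tendsto_inv_atTop_zero.comp ht0))
  have h3 := h1.mul h2
  simp only [mul_zero, add_zero, mul_one] at h3
  have h4 := ENNReal.tendsto_ofReal h3
  rw [ENNReal.ofReal_one] at h4
  refine h4.congr' ?_
  filter_upwards [ht.eventually_gt_atTop 0] with n hn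
  rw [Fs_ofReal ν hfin, ← ENNReal.ofReal_div_of_pos (by positivity)]
  congr 1
  simp only [Function.comp]
  have : (0:ℝ) < n + 1 := by positivity
  field_simp

lemma Phi_upper (ν : Measure ℝ) (T z : ℝ) :
    ∫⁻ y, ENNReal.ofReal (Rf (T - hY y) z) ∂ν ≤ ENNReal.ofReal (z^2) * ν (Set.Iic (T + |z|)) := by
  rw [← setLIntegral_const, ← lintegral_indicator measurableSet_Iic]
  refine lintegral_mono fun y => ?_
  by_cases hy : y ≤ T + |z|
  · rw [Set.indicator_of_mem (by exact hy)]
    exact ENNReal.ofReal_le_ofReal (Rf_le _ _)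
  · rw [Rf_zero (by linarith [hY_lt y, not_le.1 hy])]
    simp

lemma Phi_lower (ν : Measure ℝ) (T z : ℝ) (hT : 1 + |z| ≤ T) :
    ENNReal.ofReal (z^2) * ν (Set.Iic (T + (-1 - |z|))) ≤
      ∫⁻ y, ENNReal.ofReal (Rf (T - hY y) z) ∂ν := by
  rw [← setLIntegral_const, ← lintegral_indicator measurableSet_Iic]
  refine lintegral_mono fun y => ?_
  by_cases hy : y ≤ T + (-1 - |z|)
  · rw [Set.indicator_of_mem (by exact hy)]
    rw [Rf_eq]
    rcases le_total y 0 with h | h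
    · linarith [hY_le_one h]
    · linarith [hY_le_add h]
  · rw [Set.indicator_of_notMem (by exact hy)]
    simp

lemma Phi_tendsto (ν : Measure ℝ) (hfin : ∀ x : ℝ, ν (Set.Iic x) < ⊤)
    (hnorm : Tendsto (fun x => Fs ν x / x) atTop (nhds 1)) (z : ℝ) :
    Tendsto (fun n : ℕ => (∫⁻ y, ENNReal.ofReal (Rf ((n + 1 : ℝ) - hY y) z) ∂ν)
      / ENNReal.ofReal (n + 1)) atTop (nhds (ENNReal.ofReal (z^2))) := by
  have ht0 : Tendsto (fun n : ℕ => (n + 1 : ℝ)) atTop atTop :=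
    tendsto_atTop_add_const_right _ _ tendsto_natCast_atTop_atTop
  have hl := ENNReal.Tendsto.const_mul (a := ENNReal.ofReal (z^2))
    (Fs_shift ν hfin hnorm (-1 - |z|)) (Or.inr ENNReal.ofReal_ne_top)
  have hu := ENNReal.Tendsto.const_mul (a := ENNReal.ofReal (z^2))
    (Fs_shift ν hfin hnorm (|z|)) (Or.inr ENNReal.ofReal_ne_top)
  rw [mul_one] at hl hu
  refine tendsto_of_tendsto_of_tendsto_of_le_of_le' hl hu ?_ ?_
  · filter_upwards [ht0.eventually_ge_atTop (1 + |z|)] with n hn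
    rw [← mul_div_assoc]
    exact ENNReal.div_le_div_right (Phi_lower ν _ z hn) _
  · refine Eventually.of_forall fun n => ?_
    rw [← mul_div_assoc]
    exact ENNReal.div_le_div_right (Phi_upper ν _ z) _

lemma sigmaFinite_of_Iic (ν : Measure ℝ) (hfin : ∀ x : ℝ, ν (Set.Iic x) < ⊤) : SigmaFinite ν := by
  refine ⟨⟨⟨fun n : ℕ => Set.Iic (n : ℝ), fun _ => trivial, fun n => hfin n, ?_⟩⟩⟩
  ext x
  simp only [Set.mem_iUnion, Set.mem_Iic, Set.mem_univ, iff_true]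
  exact exists_nat_ge x

lemma Rm1 (T : ℝ) : Measurable (fun p : ℝ × ℝ => ENNReal.ofReal (Rf (T - hY p.1) p.2)) := by
  have hYm := hY_meas
  refine ENNReal.measurable_ofReal.comp (Rf_meas.comp (f := fun p : ℝ × ℝ => (T - hY p.1, p.2)) ?_)
  fun_prop

lemma Rm2 (ν : Measure ℝ) [SFinite ν] (T : ℝ) :
    Measurable (fun z => ∫⁻ y, ENNReal.ofReal (Rf (T - hY y) z) ∂ν) :=
  Measurable.lintegral_prod_left'
    (f := fun p : ℝ × ℝ => ENNReal.ofReal (Rf (T - hY p.1) p.2)) (Rm1 T)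

lemma step_swap (μ ν : Measure ℝ) [SFinite μ] [SFinite ν] (T : ℝ) :
    ∫⁻ y, ∫⁻ z, ENNReal.ofReal (Rf (T - hY y) z) ∂μ ∂ν
      = ∫⁻ z, ∫⁻ y, ENNReal.ofReal (Rf (T - hY y) z) ∂ν ∂μ :=
  lintegral_lintegral_swap (f := fun y z => ENNReal.ofReal (Rf (T - hY y) z))
    (Rm1 T).aemeasurable

lemma key (μ ν : Measure ℝ) [IsProbabilityMeasure μ]
    (h3 : Integrable (fun z : ℝ => |z|^3) μ)
    (hm : ∫ z, z ∂μ = 0)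
    (hinv : ∀ g : ℝ → ℝ≥0∞, Measurable g →
      ∫⁻ z, g z ∂ν = ∫⁻ y, ∫⁻ z, g (z + hY y) ∂μ ∂ν)
    (hfin : ∀ x : ℝ, ν (Set.Iic x) < ⊤)
    (hnorm : Tendsto (fun x => Fs ν x / x) atTop (nhds 1)) :
    ∫⁻ y, ENNReal.ofReal (2 * Real.log (1 + Real.exp (-y))) ∂ν
      = ∫⁻ z, ENNReal.ofReal (z^2) ∂μ := by
  have hYm := hY_meas
  have := sigmaFinite_of_Iic ν hfin
  have h13 : Integrable (fun z : ℝ => 1 + |z|^3) μ := (integrable_const _).add h3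
  have p1 : ∀ t : ℝ, 0 ≤ t → t ≤ 1 + t^3 := fun t ht => by
    rcases le_total t 1 with h | h
    · have : 0 ≤ t^3 := by positivity
      linarith
    · nlinarith [mul_nonneg ht (sub_nonneg.2 h), mul_nonneg (mul_nonneg ht ht) (sub_nonneg.2 h)]
  have p2 : ∀ t : ℝ, 0 ≤ t → t^2 ≤ 1 + t^3 := fun t ht => by
    rcases le_total t 1 with h | h
    · have : 0 ≤ t^3 := by positivity
      nlinarith
    · nlinarith [mul_nonneg ht (sub_nonneg.2 h), mul_nonneg (mul_nonneg ht ht) (sub_nonneg.2 h)]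
  have h1 : Integrable (fun z : ℝ => z) μ := by
    refine h13.mono' (by fun_prop) (Eventually.of_forall fun z => ?_)
    rw [Real.norm_eq_abs]; exact p1 _ (abs_nonneg z)
  have h2 : Integrable (fun z : ℝ => z^2) μ := by
    refine h13.mono' (by fun_prop) (Eventually.of_forall fun z => ?_)
    rw [Real.norm_eq_abs, abs_pow]; exact p2 _ (abs_nonneg z)
  -- the normalized identity
  have hid : ∀ n : ℕ, ∫⁻ y, ENNReal.ofReal (Df (n + 1 : ℝ) y / (n + 1 : ℝ)) ∂ν
      = ∫⁻ z, (∫⁻ y, ENNReal.ofReal (Rf ((n + 1 : ℝ) - hY y) z) ∂ν)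
      / ENNReal.ofReal (n + 1) ∂μ := by
    intro n
    have hp : (0:ℝ) < n + 1 := by positivity
    simp only [div_eq_mul_inv (G := ℝ≥0∞)]
    rw [lintegral_mul_const _ (Rm2 ν _)]
    have := step_cancel μ ν h1 h2 hm hinv hfin (n + 1) hp
    rw [step_swap] at this
    rw [← this, ← lintegral_mul_const _ (Df_meas _).ennreal_ofReal]
    refine lintegral_congr fun y => ?_
    rw [ENNReal.ofReal_div_of_pos hp, div_eq_mul_inv]
  obtain ⟨C, hC1, hC⟩ := Fs_bound ν hfin hnorm
  have hdom : ∀ (n : ℕ) (z : ℝ), (∫⁻ y, ENNReal.ofReal (Rf ((n + 1 : ℝ) - hY y) z) ∂ν)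
      / ENNReal.ofReal (n + 1) ≤ ENNReal.ofReal (2 * (C + 1) * z^2 + 2 * |z|^3) := by
    intro n z
    have hp : (0:ℝ) < n + 1 := by positivity
    refine (ENNReal.div_le_div_right (Phi_upper ν _ z) _).trans ?_
    rw [Fs_ofReal ν hfin, ← ENNReal.ofReal_mul (by positivity), ← ENNReal.ofReal_div_of_pos hp]
    apply ENNReal.ofReal_le_ofReal
    rw [div_le_iff₀ hp]
    have hb := hC (n + 1 + |z|)
    have hz := abs_nonneg z
    rw [abs_of_nonneg (show (0:ℝ) ≤ n + 1 + |z| by linarith)] at hb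
    have e3 : |z|^3 = z^2 * |z| := by rw [← sq_abs z]; ring
    have hn : (0:ℝ) ≤ n := by positivity
    calc z^2 * Fs ν (n + 1 + |z|) ≤ z^2 * (2 * (C + (n + 1 + |z|))) :=
          mul_le_mul_of_nonneg_left hb (by positivity)
      _ ≤ z^2 * ((2 * (C + 1) + 2 * |z|) * (n + 1)) := by
          apply mul_le_mul_of_nonneg_left _ (by positivity)
          nlinarith [mul_nonneg hn hz, mul_nonneg hn (by linarith : 0 ≤ C)]
      _ = _ := by rw [e3]; ring
  have hbi : Integrable (fun z : ℝ => 2 * (C + 1) * z^2 + 2 * |z|^3) μ :=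
    (h2.const_mul _).add (h3.const_mul _)
  have hbt : ∫⁻ z, ENNReal.ofReal (2 * (C + 1) * z^2 + 2 * |z|^3) ∂μ ≠ ⊤ :=
    hbi.lintegral_lt_top.ne
  have hlimR : Tendsto (fun n : ℕ => ∫⁻ y, ENNReal.ofReal (Df (n + 1 : ℝ) y / (n + 1 : ℝ)) ∂ν)
      atTop (nhds (∫⁻ z, ENNReal.ofReal (z^2) ∂μ)) := by
    simp only [hid]
    refine tendsto_lintegral_of_dominated_convergence _ ?_
      (fun n => Eventually.of_forall (hdom n)) hbt
      (Eventually.of_forall fun z => Phi_tendsto ν hfin hnorm z)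
    exact fun n => (Rm2 ν _).div_const _
  have hmD : ∀ n : ℕ, Measurable (fun y => ENNReal.ofReal (Df (n + 1 : ℝ) y / (n + 1 : ℝ))) :=
    fun n => ((Df_meas _).div_const _).ennreal_ofReal
  have hpt : ∀ y, Tendsto (fun n : ℕ => ENNReal.ofReal (Df (n + 1 : ℝ) y / (n + 1 : ℝ))) atTop
      (nhds (ENNReal.ofReal (2 * Real.log (1 + Real.exp (-y))))) :=
    fun y => ENNReal.tendsto_ofReal (Df_tendsto y)
  have hz2 : ∫⁻ z, ENNReal.ofReal (z^2) ∂μ < ⊤ := h2.lintegral_lt_top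
  have hfatou : ∫⁻ y, ENNReal.ofReal (2 * Real.log (1 + Real.exp (-y))) ∂ν < ⊤ := by
    refine lt_of_le_of_lt ?_ hz2
    rw [← hlimR.liminf_eq]
    refine le_trans (le_of_eq ?_) (lintegral_liminf_le hmD)
    exact lintegral_congr fun y => (hpt y).liminf_eq.symm
  have hD1 : ∫⁻ y, ENNReal.ofReal (Df 1 y) ∂ν < ⊤ := by
    have h0 := hid 0
    simp only [Nat.cast_zero, zero_add, div_one] at h0
    rw [h0]
    refine lt_of_le_of_lt (lintegral_mono fun z => ?_) (lt_top_iff_ne_top.2 hbt)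
    have := hdom 0 z
    simpa only [Nat.cast_zero, zero_add] using this
  have hlimL : Tendsto (fun n : ℕ => ∫⁻ y, ENNReal.ofReal (Df (n + 1 : ℝ) y / (n + 1 : ℝ)) ∂ν)
      atTop (nhds (∫⁻ y, ENNReal.ofReal (2 * Real.log (1 + Real.exp (-y))) ∂ν)) := by
    refine tendsto_lintegral_of_dominated_convergence
      (fun y => ENNReal.ofReal (Df 1 y) + ENNReal.ofReal (2 * Real.log (1 + Real.exp (-y))))
      hmD (fun n => Eventually.of_forall fun y => ?_) ?_ (Eventually.of_forall hpt)
    · beta_reduce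
      rw [← ENNReal.ofReal_add (Df_nonneg _ _) (by linarith [Dl_pos y])]
      apply ENNReal.ofReal_le_ofReal
      exact Df_le (by linarith [Nat.cast_nonneg (α := ℝ) n]) y
    · rw [lintegral_add_left (Df_meas 1).ennreal_ofReal]
      exact (ENNReal.add_lt_top.2 ⟨hD1, hfatou⟩).ne
  exact tendsto_nhds_unique hlimL hlimR

lemma tail_int (y : ℝ) :
    ∫⁻ t in Set.Ici y, ENNReal.ofReal (1 / (1 + Real.exp t))
      = ENNReal.ofReal (Real.log (1 + Real.exp (-y))) := by
  have hd : ∀ x ∈ Set.Ici y, HasDerivAt (fun t => - Real.log (1 + Real.exp (-t)))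
      (1 / (1 + Real.exp x)) x := by
    intro x _
    have h1 : (0:ℝ) < 1 + Real.exp (-x) := by positivity
    have := ((((hasDerivAt_neg x).exp).const_add 1).log h1.ne').neg
    refine this.congr_deriv ?_
    have e := Real.exp_pos x
    have e2 : Real.exp x * Real.exp (-x) = 1 := by rw [← Real.exp_add]; simp
    have h3 : (0:ℝ) < 1 + Real.exp x := by positivity
    rw [← neg_div, div_eq_div_iff h1.ne' h3.ne']
    linarith
  have hpos : ∀ x ∈ Set.Ioi y, 0 ≤ 1 / (1 + Real.exp x) := fun x _ => by positivity
  have hlim : Tendsto (fun t => - Real.log (1 + Real.exp (-t))) atTop (nhds 0) := by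
    have h0 : Tendsto (fun t : ℝ => 1 + Real.exp (-t)) atTop (nhds (1 + 0)) :=
      tendsto_const_nhds.add (Real.tendsto_exp_neg_atTop_nhds_zero)
    rw [add_zero] at h0
    have := (h0.log one_ne_zero).neg
    simpa using this
  have hi := integrableOn_Ioi_deriv_of_nonneg' hd hpos hlim
  have he := integral_Ioi_of_hasDerivAt_of_nonneg' hd hpos hlim
  rw [setLIntegral_congr Ioi_ae_eq_Ici.symm,
    ← ofReal_integral_eq_lintegral_ofReal hi (ae_restrict_of_forall_mem measurableSet_Ioi hpos), he]
  simp

lemma fubini_F (ν : Measure ℝ) (hfin : ∀ x : ℝ, ν (Set.Iic x) < ⊤) :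
    ∫⁻ t, ENNReal.ofReal (Fs ν t / (1 + Real.exp t))
      = ∫⁻ y, ENNReal.ofReal (Real.log (1 + Real.exp (-y))) ∂ν := by
  have := sigmaFinite_of_Iic ν hfin
  set f : ℝ → ℝ → ℝ≥0∞ := fun y t => ({p : ℝ × ℝ | p.1 ≤ p.2}).indicator
    (fun p => ENNReal.ofReal (1 / (1 + Real.exp p.2))) (y, t) with hf
  have hfm : Measurable (Function.uncurry f) := by
    have : Function.uncurry f = ({p : ℝ × ℝ | p.1 ≤ p.2}).indicator
      (fun p => ENNReal.ofReal (1 / (1 + Real.exp p.2))) := by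
      funext p; rfl
    rw [this]
    exact Measurable.indicator (by fun_prop) (measurableSet_le measurable_fst measurable_snd)
  have a1 : ∀ y, ∫⁻ t, f y t = ENNReal.ofReal (Real.log (1 + Real.exp (-y))) := by
    intro y
    rw [← tail_int, ← lintegral_indicator measurableSet_Ici]
    rfl
  have a2 : ∀ t, ∫⁻ y, f y t ∂ν = ENNReal.ofReal (Fs ν t / (1 + Real.exp t)) := by
    intro t
    have : ∀ y, f y t = (Set.Iic t).indicator
      (fun _ => ENNReal.ofReal (1 / (1 + Real.exp t))) y := fun y => rfl
    rw [lintegral_congr this, lintegral_indicator measurableSet_Iic, setLIntegral_const,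
      Fs_ofReal ν hfin, ← ENNReal.ofReal_mul (by positivity)]
    congr 1; ring
  rw [← lintegral_congr a1, ← lintegral_congr a2]
  exact lintegral_lintegral_swap hfm.aemeasurable |>.symm

lemma third_moment (μ : Measure ℝ) [IsProbabilityMeasure μ] (δ C : ℝ) (hδ : 0 < δ)
    (ht : ∀ x : ℝ, 0 ≤ x → μ {y : ℝ | x < |y|} ≤ ENNReal.ofReal (C * Real.exp (-δ * x))) :
    Integrable (fun z : ℝ => |z|^3) μ := by
  refine ⟨by fun_prop, ?_⟩
  rw [hasFiniteIntegral_iff_ofReal (Eventually.of_forall fun z => by positivity)]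
  have := lintegral_rpow_eq_lintegral_meas_lt_mul μ (f := fun z => |z|)
    (Eventually.of_forall fun z => abs_nonneg z) (by fun_prop) (p := 3) (by norm_num)
  have e : ∀ z : ℝ, |z|^3 = |z|^(3:ℝ) := fun z => by
    rw [← Real.rpow_natCast]; norm_num
  simp only [e]
  rw [this]
  refine ENNReal.mul_lt_top ENNReal.ofReal_lt_top ?_
  have hi : IntegrableOn (fun t : ℝ => |C| * (t^(2:ℝ) * Real.exp (-δ * t))) (Set.Ioi 0) :=
    (integrableOn_rpow_mul_exp_neg_mul_rpow (s := 2) (p := 1) (by norm_num) (by norm_num) hδ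
      |>.congr_fun (fun t _ => by simp) measurableSet_Ioi).const_mul _
  refine lt_of_le_of_lt ?_ hi.lintegral_lt_top
  refine setLIntegral_mono' measurableSet_Ioi fun t h => ?_
  have h0 : (0:ℝ) < t := h
  refine (mul_le_mul_left (ht t h0.le) _).trans ?_
  rw [← ENNReal.ofReal_mul' (by positivity)]
  apply ENNReal.ofReal_le_ofReal
  norm_num
  have : C * Real.exp (-(δ * t)) * t^2 ≤ |C| * Real.exp (-(δ * t)) * t^2 := by
    gcongr; exact le_abs_self C
  linarith

lemma final (ζ : ℝ → ℝ) (hζmeas : Measurable ζ) (hζnn : ∀ x, 0 ≤ ζ x)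
    (hζprob : ∫ x, ζ x = 1)
    (hmean : ∫ x, x * ζ x = 0)
    (δ : ℝ) (hδ : 0 < δ) (Cδ : ℝ)
    (htail : ∀ x : ℝ, 0 ≤ x → ∫ y in {y : ℝ | x < |y|}, ζ y ≤ Cδ * Real.exp (-δ * x))
    (ν : Measure ℝ) (hinv : IsInvariantY ζ ν) (hfin : ∀ x : ℝ, ν (Set.Iic x) < ⊤)
    (hnorm : Tendsto (fun x => Fs ν x / x) atTop (nhds 1)) :
    ∫⁻ y, ENNReal.ofReal (2 * Real.log (1 + Real.exp (-y))) ∂ν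
      = ∫⁻ z, ENNReal.ofReal (ζ z) * ENNReal.ofReal (z^2) := by
  have hζi : Integrable ζ := by
    by_contra h
    rw [integral_undef h] at hζprob
    exact zero_ne_one hζprob
  have hm : Measurable (fun z => ENNReal.ofReal (ζ z)) := hζmeas.ennreal_ofReal
  set μ := (volume : Measure ℝ).withDensity (fun z => ENNReal.ofReal (ζ z)) with hμ
  have : IsProbabilityMeasure μ := by
    constructor
    rw [hμ, withDensity_apply _ MeasurableSet.univ, Measure.restrict_univ,
      ← ofReal_integral_eq_lintegral_ofReal hζi (Eventually.of_forall hζnn), hζprob]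
    simp
  have h3 : Integrable (fun z : ℝ => |z|^3) μ := by
    refine third_moment μ δ Cδ hδ fun x hx => ?_
    rw [hμ, withDensity_apply _ (measurableSet_lt measurable_const (by fun_prop)),
      ← ofReal_integral_eq_lintegral_ofReal hζi.integrableOn (Eventually.of_forall hζnn)]
    exact ENNReal.ofReal_le_ofReal (htail x hx)
  have hm0 : ∫ z, z ∂μ = 0 := by
    rw [hμ, integral_withDensity_eq_integral_toReal_smul hm
      (Eventually.of_forall fun _ => ENNReal.ofReal_lt_top), ← hmean]
    refine integral_congr_ae (Eventually.of_forall fun z => ?_)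
    simp only [smul_eq_mul]
    rw [ENNReal.toReal_ofReal (hζnn z), mul_comm]
  have hYm := hY_meas
  have hk := key μ ν h3 hm0 ?_ hfin hnorm
  · rw [hk, hμ, lintegral_withDensity_eq_lintegral_mul _ hm (by fun_prop)]
    rfl
  · intro g hg
    rw [hinv g hg]
    refine lintegral_congr fun y => ?_
    rw [hμ, lintegral_withDensity_eq_lintegral_mul _ hm (by fun_prop)]
    refine lintegral_congr fun z => ?_
    simp [mul_comm]

/-- The two edge invariant measures give the same value to the Lyapunov functional. -/
theorem stmt13
    (ζ : ℝ → ℝ) (hζmeas : Measurable ζ) (hζnn : ∀ x, 0 ≤ ζ x)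
    (hζprob : ∫ x, ζ x = 1)
    (hmean : ∫ x, x * ζ x = 0)
    (δ : ℝ) (hδ : 0 < δ) (Cδ : ℝ)
    (htail : ∀ x : ℝ, 0 ≤ x → ∫ y in {y : ℝ | x < |y|}, ζ y ≤ Cδ * Real.exp (-δ * x))
    (θ : ℝ) (hθ0 : 0 < θ) (hθ1 : θ ≤ 1) (Cθ : ℝ)
    (hHolder : ∀ x y : ℝ, |ζ x - ζ y| ≤ Cθ * |x - y| ^ θ)
    (νl νr : Measure ℝ)
    (hinvl : IsInvariantY ζ νl) (hinvr : IsInvariantY (fun x => ζ (-x)) νr)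
    (hfinl : ∀ x : ℝ, νl (Set.Iic x) < ⊤) (hfinr : ∀ x : ℝ, νr (Set.Iic x) < ⊤)
    (hnorml : Tendsto (fun x => Fs νl x / x) atTop (nhds 1))
    (hnormr : Tendsto (fun x => Fs νr x / x) atTop (nhds 1)) :
    (∫ y, Real.log (1 + Real.exp (-y)) ∂νr = ∫ y, Real.log (1 + Real.exp (-y)) ∂νl) ∧
      ∫ y, Fs νr y / (1 + Real.exp y) = ∫ y, Fs νl y / (1 + Real.exp y) := by
  have hl := final ζ hζmeas hζnn hζprob hmean δ hδ Cδ htail νl hinvl hfinl hnorml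
  have hr := final (fun x => ζ (-x)) (by fun_prop) (fun x => hζnn _)
    (by rw [integral_neg_eq_self]; exact hζprob)
    (by
      have : (fun x => x * ζ (-x)) = fun x => (fun t => - (t * ζ t)) (-x) := by
        funext x; ring
      rw [this, integral_neg_eq_self (fun t => - (t * ζ t)), integral_neg, hmean, neg_zero])
    δ hδ Cδ
    (by
      intro x hx
      refine le_trans (le_of_eq ?_) (htail x hx)
      have hms : MeasurableSet {y : ℝ | x < |y|} :=
        measurableSet_lt measurable_const (by fun_prop)
      rw [← integral_indicator hms, ← integral_indicator hms,
        ← integral_neg_eq_self ({y : ℝ | x < |y|}.indicator ζ)]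
      refine integral_congr_ae (Eventually.of_forall fun y => ?_)
      simp only [Set.indicator_apply, Set.mem_ofPred_eq, abs_neg])
    νr hinvr hfinr hnormr
  have hz : ∫⁻ z, ENNReal.ofReal (ζ (-z)) * ENNReal.ofReal (z^2)
      = ∫⁻ z, ENNReal.ofReal (ζ z) * ENNReal.ofReal (z^2) := by
    rw [← lintegral_neg_eq_self (fun z => ENNReal.ofReal (ζ z) * ENNReal.ofReal (z^2))]
    simp only [neg_sq]
  have h2 : ∫⁻ y, ENNReal.ofReal (2 * Real.log (1 + Real.exp (-y))) ∂νr
      = ∫⁻ y, ENNReal.ofReal (2 * Real.log (1 + Real.exp (-y))) ∂νl := by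
    rw [hl, hr, hz]
  have hmeas : Measurable (fun y : ℝ => Real.log (1 + Real.exp (-y))) := by fun_prop
  simp only [ENNReal.ofReal_mul (zero_le_two : (0:ℝ) ≤ 2)] at h2
  rw [lintegral_const_mul _ hmeas.ennreal_ofReal, lintegral_const_mul _ hmeas.ennreal_ofReal,
    ENNReal.mul_right_inj (by simp) (by simp)] at h2
  constructor
  · rw [integral_eq_lintegral_of_nonneg_ae (Eventually.of_forall fun y => (Dl_pos y).le)
        hmeas.aestronglyMeasurable,
      integral_eq_lintegral_of_nonneg_ae (Eventually.of_forall fun y => (Dl_pos y).le)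
        hmeas.aestronglyMeasurable, h2]
  · have hFm : ∀ ν : Measure ℝ, (∀ x : ℝ, ν (Set.Iic x) < ⊤) →
        AEStronglyMeasurable (fun y => Fs ν y / (1 + Real.exp y)) volume := by
      intro ν hf
      have := (Fs_mono ν hf).measurable
      exact Measurable.aestronglyMeasurable (by fun_prop)
    have hFn : ∀ ν : Measure ℝ, 0 ≤ᵐ[volume] (fun y => Fs ν y / (1 + Real.exp y)) := by
      intro ν
      refine Eventually.of_forall fun y => ?_
      exact div_nonneg (Fs_nonneg ν y) (by positivity)
    rw [integral_eq_lintegral_of_nonneg_ae (hFn νr) (hFm νr hfinr),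
      integral_eq_lintegral_of_nonneg_ae (hFn νl) (hFm νl hfinl),
      fubini_F νr hfinr, fubini_F νl hfinl, h2]
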